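/- Let n ≥ 4, let 0 < Z ≤ 2^n and set a = ⌊log_2 Z⌋. Let s and c be integers with 2^n - 2^s < c < 2^n - 2^{s-1} and s ≤ a. Then every 2^n-periodic binary sequence S with odd Hamming weight in one period and L_1(S) = c satisfies L_{1;Z}(S) = c, and the number of such sequences S is 2^{c - 1 + s}. -/

import Mathlib

/-- Generating polynomial `S^N(x) = s_0 + s_1 x + ... + s_{N-1} x^{N-1}` of one period
of an `N`-periodic binary sequence. -/
noncomputable def genPoly {N : ℕ} (S : Fin N → ZMod 2) : Polynomial (ZMod 2) :=
  ∑ i : Fin N, Polynomial.C (S i) * Polynomial.X ^ (i : ℕ)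

/-- Linear complexity `L(S) = N - deg (gcd (1 - x^N, S^N(x)))`. -/
noncomputable def linComp {N : ℕ} (S : Fin N → ZMod 2) : ℕ :=
  N - (EuclideanDomain.gcd (1 - Polynomial.X ^ N) (genPoly S)).natDegree

/-- Hamming weight of one period of an `N`-periodic binary sequence. -/
def wt {N : ℕ} (T : Fin N → ZMod 2) : ℕ :=
  (Finset.univ.filter (fun i => T i ≠ 0)).card

/-- `k`-error linear complexity `L_{N,k}(S)`. -/
noncomputable def errLC {N : ℕ} (S : Fin N → ZMod 2) (k : ℕ) : ℕ :=
  sInf {c | ∃ T : Fin N → ZMod 2, wt T ≤ k ∧ linComp (S + T) = c}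

/-- `k`-error linear complexity with a zone of length `Z`: `L_{N,k;Z}(S)`. -/
noncomputable def errLCZone {N : ℕ} (S : Fin N → ZMod 2) (k Z : ℕ) : ℕ :=
  sInf {c | ∃ T : Fin N → ZMod 2, wt T ≤ k ∧ (∀ i : Fin N, Z ≤ (i : ℕ) → T i = 0) ∧
    linComp (S + T) = c}

/-- `E_1(j)`: the sequence whose only nonzero term in one period is a `1` at position `j`. -/
def E1 {N : ℕ} (j : Fin N) : Fin N → ZMod 2 :=
  fun i => if i = j then 1 else 0

/-!
For `N = 2 ^ n` the polynomial `1 - x ^ N` equals `(x - 1) ^ N`, so `L(S) ≤ c` means that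
`(x - 1) ^ (N - c)` divides the generating polynomial of `S`. Hence `L` is ultrametric, it takes the
value `N` exactly at the sequences of odd weight, and exactly `2 ^ c` sequences satisfy `L(S) ≤ c`.

Let `E_i` be the sequence with a single `1`, at position `i`. If `i ≡ j` modulo `2 ^ s`, then
`L(E_i + E_j) ≤ N - 2 ^ s`; otherwise `L(E_i + E_j) ≥ N - 2 ^ (s - 1)`. For `c` strictly between
these two bounds, the error position that achieves `L_1(S) = c` is therefore determined modulo
`2 ^ s` and can be moved to its residue, which lies in the zone. So `(U, j) ↦ U + E_j`, with
`L(U) = c` and `j < 2 ^ s`, parametrises the sequences `S` bijectively.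
-/

section Polynomial

open Polynomial

theorem sub_one_pow_dvd_pow_sub_pow_iff {R : Type*} [CommRing R] (x : R) (m : ℕ) {i j : ℕ}
    (hij : i ≤ j) : (x - 1) ^ m ∣ x ^ j - x ^ i ↔ (x - 1) ^ m ∣ x ^ (j - i) - 1 := by
  have coprime : IsCoprime ((x - 1) ^ m) (x ^ i) := IsCoprime.pow ⟨-1, 1, by ring⟩
  have factor : x ^ j - x ^ i = x ^ i * (x ^ (j - i) - 1) := by
    rw [mul_sub, mul_one, pow_mul_pow_sub x hij]
  rw [factor]
  exact ⟨coprime.dvd_of_dvd_mul_left, fun h => h.mul_left _⟩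

variable {R : Type*} [CommRing R] {p : ℕ} [Fact p.Prime] [CharP R p]

theorem X_pow_char_pow_mul_sub_one (v e : ℕ) :
    (X : R[X]) ^ (p ^ v * e) - 1 =
      (X - 1) ^ p ^ v * (∑ k ∈ Finset.range e, X ^ k) ^ p ^ v := by
  rw [← mul_pow, mul_geom_sum, sub_pow_char_pow, one_pow, ← pow_mul, mul_comm e]

theorem X_sub_one_pow_dvd_X_pow_sub_one_iff (v : ℕ) {e : ℕ} (he : ¬p ∣ e) (m : ℕ) :
    (X - 1 : R[X]) ^ m ∣ X ^ (p ^ v * e) - 1 ↔ m ≤ p ^ v := by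
  rw [X_pow_char_pow_mul_sub_one]
  refine ⟨fun h => ?_, fun h => (pow_dvd_pow _ h).mul_right _⟩
  by_contra! hm
  have regular : IsRegular ((X - 1 : R[X]) ^ p ^ v) := ((monic_X_sub_C 1).pow _).isRegular
  have dvd_cofactor : X - C 1 ∣ (∑ k ∈ Finset.range e, (X : R[X]) ^ k) ^ p ^ v := by
    rw [C_1, ← regular.left.dvd_cancel_left, ← pow_succ]
    exact (pow_dvd_pow _ hm).trans h
  have cast_eq_zero : ((e ^ p ^ v : ℕ) : R) = 0 := by
    simpa [eval_finsetSum] using dvd_iff_isRoot.1 dvd_cofactor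
  exact he (Nat.Prime.dvd_of_dvd_pow Fact.out ((CharP.cast_eq_zero_iff R p _).1 cast_eq_zero))

theorem X_sub_one_pow_dvd_X_pow_sub_X_pow_of_modEq {s i j : ℕ} (h : i ≡ j [MOD p ^ s]) :
    (X - 1 : R[X]) ^ p ^ s ∣ X ^ j - X ^ i := by
  wlog hij : i ≤ j generalizing i j
  · exact dvd_sub_comm.1 (this h.symm (le_of_not_ge hij))
  rw [sub_one_pow_dvd_pow_sub_pow_iff _ _ hij]
  obtain ⟨k, hk⟩ := (Nat.modEq_iff_dvd' hij).1 h
  rw [hk, X_pow_char_pow_mul_sub_one]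
  exact dvd_mul_right _ _

theorem modEq_of_X_sub_one_pow_dvd_X_pow_sub_X_pow {s m i j : ℕ} (hm : p ^ (s - 1) < m)
    (h : (X - 1 : R[X]) ^ m ∣ X ^ j - X ^ i) : i ≡ j [MOD p ^ s] := by
  wlog hij : i ≤ j generalizing i j
  · exact (this (dvd_sub_comm.1 h) (le_of_not_ge hij)).symm
  rw [sub_one_pow_dvd_pow_sub_pow_iff _ _ hij] at h
  rw [Nat.modEq_iff_dvd' hij]
  have hp : p.Prime := Fact.out
  rcases eq_or_ne (j - i) 0 with hd | hd
  · exact hd ▸ dvd_zero _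
  obtain ⟨v, e, he, hve⟩ := Nat.exists_eq_pow_mul_and_not_dvd hd p hp.ne_one
  rw [hve, X_sub_one_pow_dvd_X_pow_sub_one_iff v he] at h
  have hsv : s - 1 < v := (Nat.pow_lt_pow_iff_right hp.one_lt).1 (hm.trans_le h)
  exact hve ▸ (pow_dvd_pow p (by omega)).mul_right e

end Polynomial

section GenPoly

open Polynomial

variable {N : ℕ}

theorem genPoly_eq_degreeLTEquiv_symm (S : Fin N → ZMod 2) :
    genPoly S = ((degreeLTEquiv (ZMod 2) N).symm S : (ZMod 2)[X]) :=
  Finset.sum_congr rfl fun _ _ => C_mul_X_pow_eq_monomial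

theorem genPoly_injective : Function.Injective (genPoly (N := N)) := by
  intro S T h
  rw [genPoly_eq_degreeLTEquiv_symm, genPoly_eq_degreeLTEquiv_symm] at h
  exact (degreeLTEquiv (ZMod 2) N).symm.injective (Subtype.ext h)

theorem range_genPoly : Set.range (genPoly (N := N)) = {f : (ZMod 2)[X] | f.degree < N} := by
  ext f
  rw [Set.mem_ofPred_eq, ← mem_degreeLT]
  constructor
  · rintro ⟨S, rfl⟩
    exact genPoly_eq_degreeLTEquiv_symm S ▸ Subtype.prop _
  · intro hf
    refine ⟨degreeLTEquiv (ZMod 2) N ⟨f, hf⟩, ?_⟩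
    rw [genPoly_eq_degreeLTEquiv_symm, LinearEquiv.symm_apply_apply]

theorem genPoly_add (S T : Fin N → ZMod 2) : genPoly (S + T) = genPoly S + genPoly T := by
  simp [genPoly, add_mul, Finset.sum_add_distrib]

theorem genPoly_E1 (j : Fin N) : genPoly (E1 j) = X ^ (j : ℕ) := by
  simp [genPoly, E1]

theorem eval_one_genPoly (S : Fin N → ZMod 2) : (genPoly S).eval 1 = (wt S : ZMod 2) := by
  have indicator : ∀ a : ZMod 2, a = if a ≠ 0 then 1 else 0 := by decide
  simp only [genPoly, wt, eval_finsetSum, eval_C_mul, eval_pow, eval_X, one_pow, mul_one,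
    Finset.natCast_card_filter]
  exact Finset.sum_congr rfl fun i _ => indicator (S i)

theorem odd_wt_iff_not_X_sub_one_dvd_genPoly (S : Fin N → ZMod 2) :
    Odd (wt S) ↔ ¬X - 1 ∣ genPoly S := by
  rw [← C_1, dvd_iff_isRoot, IsRoot, eval_one_genPoly, ZMod.natCast_eq_zero_iff_even,
    Nat.not_even_iff_odd]

theorem ncard_degree_lt (N : ℕ) : {f : (ZMod 2)[X] | f.degree < N}.ncard = 2 ^ N := by
  rw [← range_genPoly, ← Set.image_univ, Set.ncard_image_of_injective _ genPoly_injective,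
    Set.ncard_univ]
  simp

theorem ncard_dvd_genPoly {q : (ZMod 2)[X]} (hq : q ≠ 0) (hqN : q.natDegree ≤ N) :
    {S : Fin N → ZMod 2 | q ∣ genPoly S}.ncard = 2 ^ (N - q.natDegree) := by
  have degree_mul_lt (r : (ZMod 2)[X]) :
      (q * r).degree < N ↔ r.degree < (N - q.natDegree : ℕ) := by
    rcases eq_or_ne r 0 with rfl | hr
    · simp
    · rw [degree_mul, degree_eq_natDegree hq, degree_eq_natDegree hr]
      norm_cast
      omega
  have image_eq : genPoly '' {S : Fin N → ZMod 2 | q ∣ genPoly S} =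
      (q * ·) '' {r | r.degree < (N - q.natDegree : ℕ)} := by
    calc genPoly '' (genPoly ⁻¹' {f | q ∣ f})
      _ = {f | q ∣ f} ∩ {f | f.degree < N} := by
          rw [Set.image_preimage_eq_inter_range, range_genPoly]
      _ = (q * ·) '' ((q * ·) ⁻¹' {f | f.degree < N}) := by
          rw [Set.image_preimage_eq_inter_range, Set.inter_comm]
          congr 1
          ext f
          simp [dvd_def, eq_comm]
      _ = _ := by simp only [Set.preimage_ofPred_eq, degree_mul_lt]
  rw [← Set.ncard_image_of_injective _ genPoly_injective, image_eq,
    Set.ncard_image_of_injective _ (mul_right_injective₀ hq), ncard_degree_lt]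

end GenPoly

section Weight

variable {N : ℕ}

theorem wt_zero : wt (0 : Fin N → ZMod 2) = 0 := by
  simp [wt]

theorem wt_E1 (j : Fin N) : wt (E1 j) = 1 := by
  simp [wt, E1, Finset.filter_eq']

theorem eq_zero_or_eq_E1_of_wt_le_one {T : Fin N → ZMod 2} (hT : wt T ≤ 1) :
    T = 0 ∨ ∃ j, T = E1 j := by
  refine or_iff_not_imp_left.2 fun h0 => ?_
  obtain ⟨j, hj⟩ := Function.ne_iff.1 h0
  have eq_one_of_ne_zero : ∀ a : ZMod 2, a ≠ 0 → a = 1 := by decide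
  refine ⟨j, funext fun i => ?_⟩
  by_cases hi : i = j
  · simp [E1, hi, eq_one_of_ne_zero _ hj]
  · simp only [E1, if_neg hi]
    by_contra hTi
    exact hi (Finset.card_le_one.1 hT i (by simpa using hTi) j (by simpa using hj))

end Weight

section ErrorComplexity

variable {N : ℕ} (S : Fin N → ZMod 2)

theorem linComp_le : linComp S ≤ N :=
  Nat.sub_le _ _

theorem errLC_le {T : Fin N → ZMod 2} {k : ℕ} (hT : wt T ≤ k) : errLC S k ≤ linComp (S + T) :=
  Nat.sInf_le ⟨T, hT, rfl⟩

theorem errLCZone_le {T : Fin N → ZMod 2} {k Z : ℕ} (hT : wt T ≤ k)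
    (hTZ : ∀ i : Fin N, Z ≤ (i : ℕ) → T i = 0) : errLCZone S k Z ≤ linComp (S + T) :=
  Nat.sInf_le ⟨T, hT, hTZ, rfl⟩

theorem errLC_le_errLCZone (k Z : ℕ) : errLC S k ≤ errLCZone S k Z := by
  refine le_csInf ⟨_, 0, by simp [wt_zero], by simp, rfl⟩ ?_
  rintro _ ⟨T, hT, -, rfl⟩
  exact errLC_le S hT

theorem errLCZone_one_le_linComp_add_E1 {Z : ℕ} {j : Fin N} (hj : (j : ℕ) < Z) :
    errLCZone S 1 Z ≤ linComp (S + E1 j) := by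
  refine errLCZone_le S (wt_E1 j).le fun i hi => if_neg ?_
  rintro rfl
  omega

end ErrorComplexity

section TwoPower

open Polynomial

variable {n : ℕ} {S T : Fin (2 ^ n) → ZMod 2}

theorem linComp_le_iff {c : ℕ} :
    linComp S ≤ c ↔ (X - 1) ^ (2 ^ n - c) ∣ genPoly S := by
  have prime : Prime (X - 1 : (ZMod 2)[X]) := prime_X_sub_C 1
  have modulus : (1 - X ^ 2 ^ n : (ZMod 2)[X]) = (X - 1) ^ 2 ^ n := by
    rw [sub_pow_char_pow, one_pow, ← neg_sub, CharTwo.neg_eq]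
  rw [linComp, modulus]
  set g := EuclideanDomain.gcd ((X - 1 : (ZMod 2)[X]) ^ 2 ^ n) (genPoly S)
  obtain ⟨k, -, gcd_assoc⟩ : ∃ k ≤ 2 ^ n, Associated g ((X - 1) ^ k) :=
    (dvd_prime_pow prime _).1 (EuclideanDomain.gcd_dvd_left _ _)
  have natDegree_gcd : g.natDegree = k := by
    rw [natDegree_eq_of_degree_eq (degree_eq_degree_of_associated gcd_assoc), ← C_1,
      natDegree_pow, natDegree_X_sub_C, mul_one]
  have dvd_gcd_iff : (X - 1) ^ (2 ^ n - c) ∣ genPoly S ↔ (X - 1) ^ (2 ^ n - c) ∣ g :=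
    ⟨EuclideanDomain.dvd_gcd (pow_dvd_pow _ (Nat.sub_le _ _)),
      fun h => h.trans (EuclideanDomain.gcd_dvd_right _ _)⟩
  rw [dvd_gcd_iff, gcd_assoc.dvd_iff_dvd_right, pow_dvd_pow_iff prime.ne_zero prime.not_isUnit,
    natDegree_gcd]
  omega

theorem linComp_add_le_max (S T : Fin (2 ^ n) → ZMod 2) :
    linComp (S + T) ≤ max (linComp S) (linComp T) := by
  rw [linComp_le_iff, genPoly_add]
  exact dvd_add (linComp_le_iff.1 (le_max_left _ _)) (linComp_le_iff.1 (le_max_right _ _))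

theorem linComp_add_eq_max_of_ne (h : linComp S ≠ linComp T) :
    linComp (S + T) = max (linComp S) (linComp T) := by
  have hST := linComp_add_le_max S T
  have hS := linComp_add_le_max (S + T) T
  have hT := linComp_add_le_max (T + S) S
  rw [add_assoc, ZModModule.add_self, add_zero] at hS hT
  rw [add_comm T S] at hT
  omega

theorem linComp_eq_two_pow_iff_odd_wt : linComp S = 2 ^ n ↔ Odd (wt S) := by
  have hpos : 0 < 2 ^ n := Nat.two_pow_pos n
  have hle := linComp_le S
  have lt_iff_dvd : linComp S ≤ 2 ^ n - 1 ↔ X - 1 ∣ genPoly S := by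
    rw [linComp_le_iff, Nat.sub_sub_self hpos, pow_one]
  rw [odd_wt_iff_not_X_sub_one_dvd_genPoly, ← lt_iff_dvd]
  omega

theorem linComp_E1 (j : Fin (2 ^ n)) : linComp (E1 j) = 2 ^ n :=
  linComp_eq_two_pow_iff_odd_wt.2 (by simp [wt_E1])

theorem odd_wt_add_E1 (hS : linComp S < 2 ^ n) (j : Fin (2 ^ n)) : Odd (wt (S + E1 j)) := by
  rw [← linComp_eq_two_pow_iff_odd_wt, linComp_add_eq_max_of_ne (by rw [linComp_E1]; omega),
    linComp_E1, max_eq_right hS.le]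

theorem linComp_E1_add_E1_le_iff {i j : Fin (2 ^ n)} {c : ℕ} :
    linComp (E1 i + E1 j) ≤ c ↔
      (X - 1 : (ZMod 2)[X]) ^ (2 ^ n - c) ∣ X ^ (j : ℕ) - X ^ (i : ℕ) := by
  rw [linComp_le_iff, genPoly_add, genPoly_E1, genPoly_E1, add_comm,
    ← CharTwo.sub_eq_add (X ^ (j : ℕ))]

theorem linComp_E1_add_E1_le_of_modEq {s : ℕ} {i j : Fin (2 ^ n)}
    (h : (i : ℕ) ≡ j [MOD 2 ^ s]) : linComp (E1 i + E1 j) ≤ 2 ^ n - 2 ^ s :=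
  linComp_E1_add_E1_le_iff.2 <|
    (pow_dvd_pow _ tsub_tsub_le).trans (X_sub_one_pow_dvd_X_pow_sub_X_pow_of_modEq h)

theorem modEq_of_linComp_E1_add_E1_lt {s : ℕ} {i j : Fin (2 ^ n)}
    (h : linComp (E1 i + E1 j) < 2 ^ n - 2 ^ (s - 1)) : (i : ℕ) ≡ j [MOD 2 ^ s] :=
  modEq_of_X_sub_one_pow_dvd_X_pow_sub_X_pow (lt_tsub_comm.1 h)
    (linComp_E1_add_E1_le_iff.1 le_rfl)

theorem ncard_linComp_le {c : ℕ} (hc : c ≤ 2 ^ n) :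
    {S : Fin (2 ^ n) → ZMod 2 | linComp S ≤ c}.ncard = 2 ^ c := by
  have monic : ((X - 1 : (ZMod 2)[X]) ^ (2 ^ n - c)).Monic := (monic_X_sub_C 1).pow _
  have natDegree_eq : ((X - 1 : (ZMod 2)[X]) ^ (2 ^ n - c)).natDegree = 2 ^ n - c := by
    rw [← C_1, natDegree_pow, natDegree_X_sub_C, mul_one]
  simp only [linComp_le_iff]
  rw [ncard_dvd_genPoly monic.ne_zero (by omega), natDegree_eq, Nat.sub_sub_self hc]

theorem ncard_linComp_eq_succ {c : ℕ} (hc : c < 2 ^ n) :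
    {S : Fin (2 ^ n) → ZMod 2 | linComp S = c + 1}.ncard = 2 ^ c := by
  have level_eq_diff : {S : Fin (2 ^ n) → ZMod 2 | linComp S = c + 1} =
      {S | linComp S ≤ c + 1} \ {S | linComp S ≤ c} := by
    ext S
    simp only [Set.mem_ofPred_eq, Set.mem_sdiff]
    omega
  have sublevel_subset : {S : Fin (2 ^ n) → ZMod 2 | linComp S ≤ c} ⊆ {S | linComp S ≤ c + 1} :=
    fun _ => Nat.le_succ_of_le
  rw [level_eq_diff, Set.ncard_sdiff sublevel_subset, ncard_linComp_le hc,
    ncard_linComp_le hc.le, pow_succ]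
  omega

-- Odd weight already has the largest complexity `2 ^ n`, so not changing any term never wins.
theorem errLC_one_eq_iInf (hS : Odd (wt S)) : errLC S 1 = ⨅ j, linComp (S + E1 j) := by
  refine le_antisymm (le_ciInf fun j => errLC_le S (wt_E1 j).le) ?_
  refine le_csInf ⟨_, 0, by simp [wt_zero], rfl⟩ ?_
  rintro _ ⟨T, hT, rfl⟩
  rcases eq_zero_or_eq_E1_of_wt_le_one hT with rfl | ⟨j, rfl⟩
  · rw [add_zero, linComp_eq_two_pow_iff_odd_wt.2 hS]
    exact (ciInf_le' _ 0).trans (linComp_le _)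
  · exact ciInf_le' _ j

theorem exists_lt_linComp_add_E1_eq_errLC_one {s : ℕ} (hS : Odd (wt S))
    (hs : 2 ^ n - 2 ^ s ≤ errLC S 1) :
    ∃ j : Fin (2 ^ n), (j : ℕ) < 2 ^ s ∧ linComp (S + E1 j) = errLC S 1 := by
  obtain ⟨i, hi⟩ : ∃ i, linComp (S + E1 i) = errLC S 1 :=
    errLC_one_eq_iInf hS ▸ exists_eq_ciInf_of_finite
  let j : Fin (2 ^ n) := ⟨i % 2 ^ s, (Nat.mod_le _ _).trans_lt i.2⟩
  have hij : (i : ℕ) ≡ j [MOD 2 ^ s] := (Nat.mod_modEq _ _).symm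
  refine ⟨j, Nat.mod_lt _ (Nat.two_pow_pos s), le_antisymm ?_ (errLC_le S (wt_E1 j).le)⟩
  calc linComp (S + E1 j)
    _ = linComp ((S + E1 i) + (E1 i + E1 j)) := by rw [ZModModule.add_add_add_cancel]
    _ ≤ max (linComp (S + E1 i)) (linComp (E1 i + E1 j)) := linComp_add_le_max _ _
    _ ≤ errLC S 1 := max_le hi.le ((linComp_E1_add_E1_le_of_modEq hij).trans hs)

theorem errLCZone_one_eq_errLC_one {s Z : ℕ} (hS : Odd (wt S)) (hs : 2 ^ n - 2 ^ s ≤ errLC S 1)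
    (hsZ : 2 ^ s ≤ Z) : errLCZone S 1 Z = errLC S 1 := by
  obtain ⟨j, hj, hjc⟩ := exists_lt_linComp_add_E1_eq_errLC_one hS hs
  exact le_antisymm (hjc ▸ errLCZone_one_le_linComp_add_E1 S (hj.trans_le hsZ))
    (errLC_le_errLCZone S 1 Z)

theorem errLC_one_add_E1 {s : ℕ} (hlo : 2 ^ n - 2 ^ s < linComp S)
    (hhi : linComp S < 2 ^ n - 2 ^ (s - 1)) (j : Fin (2 ^ n)) :
    errLC (S + E1 j) 1 = linComp S := by
  have le_linComp (i : Fin (2 ^ n)) : linComp S ≤ linComp (S + E1 j + E1 i) := by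
    have separated : linComp S ≠ linComp (E1 j + E1 i) := fun heq =>
      hlo.not_ge (heq ▸ linComp_E1_add_E1_le_of_modEq (modEq_of_linComp_E1_add_E1_lt (heq ▸ hhi)))
    rw [add_assoc, linComp_add_eq_max_of_ne separated]
    exact le_max_left _ _
  have attained := errLC_le (S + E1 j) (wt_E1 j).le
  rw [add_assoc, ZModModule.add_self, add_zero] at attained
  refine le_antisymm attained ?_
  rw [errLC_one_eq_iInf (odd_wt_add_E1 (hhi.trans_le (Nat.sub_le _ _)) j)]
  exact le_ciInf le_linComp

theorem setOf_odd_wt_errLC_one_eq {s c : ℕ} (hlo : 2 ^ n - 2 ^ s < c)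
    (hhi : c < 2 ^ n - 2 ^ (s - 1)) :
    {S : Fin (2 ^ n) → ZMod 2 | Odd (wt S) ∧ errLC S 1 = c} =
      (fun x : (Fin (2 ^ n) → ZMod 2) × Fin (2 ^ n) => x.1 + E1 x.2) ''
        ({U | linComp U = c} ×ˢ {j : Fin (2 ^ n) | (j : ℕ) < 2 ^ s}) := by
  ext S
  constructor
  · rintro ⟨hS, rfl⟩
    obtain ⟨j, hj, hjc⟩ := exists_lt_linComp_add_E1_eq_errLC_one hS hlo.le
    refine ⟨(S + E1 j, j), ⟨hjc, hj⟩, ?_⟩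
    simp only [add_assoc, ZModModule.add_self, add_zero]
  · rintro ⟨⟨U, j⟩, ⟨rfl, -⟩, rfl⟩
    exact ⟨odd_wt_add_E1 (hhi.trans_le (Nat.sub_le _ _)) j, errLC_one_add_E1 hlo hhi j⟩

theorem injOn_add_E1 {s c : ℕ} (hhi : c < 2 ^ n - 2 ^ (s - 1)) :
    Set.InjOn (fun x : (Fin (2 ^ n) → ZMod 2) × Fin (2 ^ n) => x.1 + E1 x.2)
      ({U | linComp U = c} ×ˢ {j : Fin (2 ^ n) | (j : ℕ) < 2 ^ s}) := by
  rintro ⟨U, i⟩ ⟨hU : linComp U = c, hi⟩ ⟨V, j⟩ ⟨hV : linComp V = c, hj⟩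
    (h : U + E1 i = V + E1 j)
  have sum_eq : E1 i + E1 j = U + V := by
    rw [add_comm, ← ZModModule.sub_eq_add, ← ZModModule.sub_eq_add U, sub_eq_sub_iff_add_eq_add,
      h, add_comm]
  have close : linComp (E1 i + E1 j) ≤ c := by
    simpa [sum_eq, hU, hV] using linComp_add_le_max U V
  obtain rfl : i = j :=
    Fin.ext ((modEq_of_linComp_E1_add_E1_lt (close.trans_lt hhi)).eq_of_lt_of_lt hi hj)
  rw [add_right_cancel h]

theorem ncard_odd_wt_errLC_one_eq {s c : ℕ} (hlo : 2 ^ n - 2 ^ s < c)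
    (hhi : c < 2 ^ n - 2 ^ (s - 1)) :
    {S : Fin (2 ^ n) → ZMod 2 | Odd (wt S) ∧ errLC S 1 = c}.ncard = 2 ^ (c - 1 + s) := by
  have s_le_n : s ≤ n := by
    have : s - 1 < n := (Nat.pow_lt_pow_iff_right one_lt_two).1
      (Nat.lt_of_sub_pos (Nat.zero_lt_of_lt hhi))
    omega
  have ncard_positions : {j : Fin (2 ^ n) | (j : ℕ) < 2 ^ s}.ncard = 2 ^ s := by
    rw [Set.ncard_eq_toFinset_card', Set.toFinset_ofPred, Fin.card_filter_val_lt,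
      min_eq_right (Nat.pow_le_pow_right two_pos s_le_n)]
  have c_le : c ≤ 2 ^ n := hhi.le.trans (Nat.sub_le _ _)
  obtain ⟨d, rfl⟩ : ∃ d, c = d + 1 := Nat.exists_eq_succ_of_ne_zero (by omega)
  rw [setOf_odd_wt_errLC_one_eq hlo hhi, (injOn_add_E1 hhi).ncard_image,
    Set.ncard_prod, ncard_linComp_eq_succ c_le, ncard_positions, ← pow_add,
    Nat.add_sub_cancel]

end TwoPower

theorem stmt8_general {n Z s c : ℕ} (h1 : 2 ^ n - 2 ^ s < c) (h2 : c < 2 ^ n - 2 ^ (s - 1))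
    (hsZ : 2 ^ s ≤ Z) :
    (∀ S : Fin (2 ^ n) → ZMod 2, Odd (wt S) → errLC S 1 = c → errLCZone S 1 Z = c) ∧
    {S : Fin (2 ^ n) → ZMod 2 | Odd (wt S) ∧ errLC S 1 = c}.ncard = 2 ^ (c - 1 + s) := by
  refine ⟨?_, ncard_odd_wt_errLC_one_eq h1 h2⟩
  rintro S hS rfl
  exact errLCZone_one_eq_errLC_one hS h1.le hsZ

/-- Case `s ≤ a` of the spectrum of `1`-error linear complexity with zone length `Z`:
every odd-weight sequence with `L_1(S) = c` has `L_{1;Z}(S) = c`, and there are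
exactly `2^{c-1+s}` such sequences. -/
theorem stmt8 (n Z s c : ℕ) (hn : 4 ≤ n) (hZ0 : 0 < Z) (hZ : Z ≤ 2^n)
    (h1 : 2^n - 2^s < c) (h2 : c < 2^n - 2^(s-1)) (hsa : s ≤ Nat.log 2 Z) :
    (∀ S : Fin (2^n) → ZMod 2, Odd (wt S) → errLC S 1 = c → errLCZone S 1 Z = c) ∧
    {S : Fin (2^n) → ZMod 2 | Odd (wt S) ∧ errLC S 1 = c}.ncard = 2^(c - 1 + s) :=
  stmt8_general h1 h2 (Nat.pow_le_of_le_log hZ0.ne' hsa)
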